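/- Let f be a cellular automaton on A^ℤ, let n ∈ ℕ, and let [v]_i ⊆ A^ℤ be a cylinder set. Then there exist a cylinder set [w]_j ⊆ [v]_i and T ∈ ℕ such that for all t ≥ T and all x ∈ [w]_j, the word f^t(x)_{[0,n)} belongs to L_n(ω̃(f)). -/

import Mathlib

open Filter Set Function

namespace Gls

variable {A : Type*}

/-- The left shift map on `A^ℤ`. -/
def shift (x : ℤ → A) : ℤ → A := fun i => x (i + 1)

/-- A cellular automaton: a continuous shift-commuting self-map of the full shift. -/
def IsCA [TopologicalSpace A] (f : (ℤ → A) → (ℤ → A)) : Prop :=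
  Continuous f ∧ f ∘ shift = shift ∘ f

/-- The set of limit points of the forward orbit of `x` under `f`. -/
def omegaSet [TopologicalSpace A] (f : (ℤ → A) → (ℤ → A)) (x : ℤ → A) : Set (ℤ → A) :=
  {y | MapClusterPt y atTop fun t => f^[t] x}

/-- The realm of attraction of `Y`. -/
def realm [TopologicalSpace A] (f : (ℤ → A) → (ℤ → A)) (Y : Set (ℤ → A)) : Set (ℤ → A) :=
  {x | omegaSet f x ⊆ Y}

/-- The generic limit set: the intersection of all closed sets whose realm is comeager. -/
def genLimitSet [TopologicalSpace A] (f : (ℤ → A) → (ℤ → A)) : Set (ℤ → A) :=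
  ⋂₀ {C | IsClosed C ∧ realm f C ∈ residual (ℤ → A)}

/-- The word `x_{[i, i+n)}` of length `n` read in the configuration `x` from position `i`. -/
def word (x : ℤ → A) (i : ℤ) (n : ℕ) : List A :=
  (List.range n).map fun k => x (i + k)

/-- The cylinder set `[w]_i`. -/
def cylinder (w : List A) (i : ℤ) : Set (ℤ → A) := {x | word x i w.length = w}

/-- The language of `X`: all finite words occurring in points of `X`. -/
def lang (X : Set (ℤ → A)) : Set (List A) :=
  {w | ∃ x ∈ X, ∃ i : ℤ, word x i w.length = w}


theorem word_def (x : ℤ → A) (i : ℤ) (n : ℕ) :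
    word x i n = List.map (fun k : ℕ => x (i + (k : ℤ))) (List.range n) := by
  have h : ∀ l : List ℕ, List.flatMap (fun a : ℕ => [(a : ℤ)]) l = l.map (fun a : ℕ => (a : ℤ)) := by
    intro l
    induction l with
    | nil => rfl
    | cons a l ih => simp [ih]
  simp [word, h]

theorem word_eq_iff (x y : ℤ → A) (i : ℤ) (n : ℕ) :
    word x i n = word y i n ↔ ∀ k < n, x (i + k) = y (i + k) := by
  simp [word_def]

theorem word_length (x : ℤ → A) (i : ℤ) (n : ℕ) : (word x i n).length = n := by
  simp [word]

theorem continuous_word [TopologicalSpace A] [DiscreteTopology A] (i : ℤ) (n : ℕ) (S : Set (List A)) :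
    IsClopen {x : ℤ → A | word x i n ∈ S} := by
  have key : ∀ S : Set (List A), IsOpen {x : ℤ → A | word x i n ∈ S} := by
    intro S
    rw [isOpen_iff_mem_nhds]
    intro x hx
    have h : ∀ᶠ y in nhds x, ∀ k ∈ Finset.range n, y (i + k) = x (i + k) := by
      rw [Filter.eventually_all_finset]
      intro k _
      have := (continuous_apply (A := fun _ : ℤ => A) (i + k : ℤ)).tendsto x
      rw [nhds_discrete A, tendsto_pure] at this
      exact this
    filter_upwards [h] with y hy
    have : word y i n = word x i n :=
      (word_eq_iff y x i n).2 fun k hk => hy k (Finset.mem_range.2 hk)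
    show word y i n ∈ S
    rw [this]; exact hx
  exact ⟨⟨by simpa [compl_ofPred] using key Sᶜ⟩, key S⟩

theorem exists_cylinder [TopologicalSpace A] [DiscreteTopology A] (O : Set (ℤ → A)) (hO : IsOpen O)
    (x : ℤ → A) (hx : x ∈ O) : ∃ (w : List A) (j : ℤ), cylinder w j ⊆ O := by
  obtain ⟨I, u, h1, h2⟩ := isOpen_pi_iff.1 hO x hx
  obtain ⟨m, hm⟩ : ∃ m : ℕ, ∀ a ∈ I, a.natAbs ≤ m :=
    ⟨I.sup Int.natAbs, fun a ha => Finset.le_sup (f := Int.natAbs) ha⟩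
  refine ⟨word x (-m) (2 * m + 1), -m, fun y hy => h2 fun a ha => ?_⟩
  have hy' : word y (-m) (2 * m + 1) = word x (-m) (2 * m + 1) := by
    have h := hy
    simp only [cylinder, mem_ofPred_eq, word_length] at h
    exact h
  rw [word_eq_iff] at hy'
  have hb := hm a ha
  have := hy' (a + m).toNat (by omega)
  have e : (-(m:ℤ) + ((a + m).toNat : ℤ)) = a := by omega
  rw [e] at this
  rw [this]
  exact (h1 a ha).2

theorem cylinder_nonempty [Nonempty A] (v : List A) (i : ℤ) : (cylinder v i).Nonempty := by
  inhabit A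
  refine ⟨fun j => v.getD (j - i).toNat default, ?_⟩
  show word _ _ _ = _
  apply List.ext_getElem
  · simp [word]
  · intro k h1 h2
    simp [word_def, h2]

theorem realm_gen [Finite A] [TopologicalSpace A] [DiscreteTopology A]
    (f : (ℤ → A) → (ℤ → A)) : realm f (genLimitSet f) ∈ residual (ℤ → A) := by
  obtain ⟨T, hTc, hTs, hTu⟩ := TopologicalSpace.isOpen_sUnion_countable
    (compl '' {C | IsClosed C ∧ realm f C ∈ residual (ℤ → A)})
    (by rintro _ ⟨C, hC, rfl⟩; exact hC.1.isOpen_compl)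
  have h : ⋂ s ∈ T, realm f sᶜ ∈ residual (ℤ → A) := by
    rw [countable_bInter_mem hTc]
    intro s hs
    obtain ⟨C, hC, rfl⟩ := hTs hs
    rw [compl_compl]; exact hC.2
  refine mem_of_superset h fun x hx y hy => ?_
  have hg : genLimitSet f = (⋃₀ T)ᶜ := by
    rw [hTu, genLimitSet, sInter_eq_compl_sUnion_compl]
  rw [hg]
  rintro ⟨s, hs, hys⟩
  exact (mem_iInter₂.1 hx s hs) hy hys

/-- every cylinder `[v]_i` contains a cylinder `[w]_j` which is
`ω̃(f)`-forcing: for some `T` and all `t ≥ T`, every `x ∈ [w]_j` satisfies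
`f^t(x)_{[0,n)} ∈ L_n(ω̃(f))`. -/
theorem stmt2 [Fintype A] [Nonempty A] [TopologicalSpace A] [DiscreteTopology A]
    (f : (ℤ → A) → (ℤ → A)) (hf : IsCA f) (n : ℕ) (v : List A) (i : ℤ) :
    ∃ (w : List A) (j : ℤ) (T : ℕ), cylinder w j ⊆ cylinder v i ∧
      ∀ t ≥ T, ∀ x ∈ cylinder w j, word (f^[t] x) 0 n ∈ lang (genLimitSet f) := by
  classical
  set G := genLimitSet f
  set E : ℕ → Set (ℤ → A) := fun T => {x | ∀ t ≥ T, word (f^[t] x) 0 n ∈ lang G} with hE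
  have hEc : ∀ T, IsClosed (E T) := by
    intro T
    have : E T = ⋂ t ≥ T, f^[t] ⁻¹' {x | word x 0 n ∈ lang G} := by
      ext x; simp [hE]
    rw [this]
    exact isClosed_biInter fun t _ => (continuous_word 0 n _).1.preimage (hf.1.iterate t)
  have hcov : realm f G ⊆ ⋃ T, E T := by
    intro x hx
    by_contra hne
    have hfr : ∃ᶠ t in atTop, f^[t] x ∈ {x | word x 0 n ∈ (lang G)ᶜ} := by
      rw [frequently_atTop]
      intro T
      by_contra hh
      push Not at hh
      exact hne (mem_iUnion.2 ⟨T, fun t ht => by simpa using hh t ht⟩)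
    obtain ⟨y, hy, hyc⟩ := (continuous_word 0 n (lang G)ᶜ).1.isCompact.exists_mapClusterPt_of_frequently hfr
    exact hy ⟨y, hx hyc, 0, by rw [word_length]⟩
  have hU : IsClopen (cylinder v i) := continuous_word i v.length {v}
  obtain ⟨T, x, hx⟩ : ∃ T, (interior (E T ∩ cylinder v i)).Nonempty := by
    by_contra! hcon
    have h2 : ∀ T, (E T ∩ cylinder v i)ᶜ ∈ residual (ℤ → A) := fun T =>
      residual_of_dense_open ((hEc T).inter hU.1).isOpen_compl
        (interior_eq_empty_iff_dense_compl.1 (hcon T))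
    have h3 := inter_mem (realm_gen f) (countable_iInter_mem.2 h2)
    obtain ⟨x, hxU, hxR, hxI⟩ := (dense_of_mem_residual h3).inter_open_nonempty _ hU.2
      (cylinder_nonempty v i)
    obtain ⟨T, hT⟩ := mem_iUnion.1 (hcov hxR)
    exact mem_iInter.1 hxI T ⟨hT, hxU⟩
  obtain ⟨w, j, hw⟩ := exists_cylinder _ isOpen_interior x hx
  exact ⟨w, j, T, fun y hy => (interior_subset (hw hy)).2,
    fun t ht y hy => (interior_subset (hw hy)).1 t ht⟩

end Gls
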